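/- Let n ≥ 1 and r ≥ 1, and let g, g' : Fin r → Sp(n). If for every word w ∈ FreeGroup(Fin r) the elements w(g) and w(g') are conjugate in Sp(n), then g and g' are diagonally conjugate, i.e. there exists k ∈ Sp(n) such that g'(i) = k · g(i) · k⁻¹ for all i. -/

import Mathlib

open scoped Matrix

/-- The standard skew-symmetric matrix `J = [[0, Iₙ], [-Iₙ, 0]]` of size `2n`. -/
def sympJ (n : ℕ) : Matrix (Fin (2 * n)) (Fin (2 * n)) ℂ :=
  fun i j => if (i : ℕ) + n = (j : ℕ) then 1 else if (j : ℕ) + n = (i : ℕ) then -1 else 0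

/-- The compact symplectic group `Sp(n) = U(2n) ∩ Sp_{2n}(ℂ)`, as the subgroup of the
unitary group `U(2n)` consisting of the matrices `g` with `gᵀ * J * g = J`. -/
def Sp (n : ℕ) : Subgroup (Matrix.unitaryGroup (Fin (2 * n)) ℂ) where
  carrier := {g | (g : Matrix (Fin (2 * n)) (Fin (2 * n)) ℂ)ᵀ * sympJ n
    * (g : Matrix (Fin (2 * n)) (Fin (2 * n)) ℂ) = sympJ n}
  one_mem' := by simp
  mul_mem' := by
    intro a b ha hb
    simp only [Set.mem_setOf_eq, Matrix.UnitaryGroup.mul_val, Matrix.transpose_mul] at *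
    calc (b : Matrix (Fin (2 * n)) (Fin (2 * n)) ℂ)ᵀ * (a : Matrix _ _ ℂ)ᵀ * sympJ n
          * ((a : Matrix _ _ ℂ) * (b : Matrix _ _ ℂ))
        = (b : Matrix _ _ ℂ)ᵀ * ((a : Matrix _ _ ℂ)ᵀ * sympJ n * (a : Matrix _ _ ℂ))
          * (b : Matrix _ _ ℂ) := by
          simp only [Matrix.mul_assoc]
      _ = sympJ n := by rw [ha, hb]
  inv_mem' := by
    intro a ha
    simp only [Set.mem_setOf_eq] at *
    have h1 : (a : Matrix (Fin (2 * n)) (Fin (2 * n)) ℂ)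
        * ((a⁻¹ : Matrix.unitaryGroup (Fin (2 * n)) ℂ) : Matrix (Fin (2 * n)) (Fin (2 * n)) ℂ)
        = 1 := by
      rw [← Matrix.UnitaryGroup.mul_val, mul_inv_cancel, Matrix.UnitaryGroup.one_val]
    calc ((a⁻¹ : Matrix.unitaryGroup (Fin (2 * n)) ℂ) : Matrix (Fin (2 * n)) (Fin (2 * n)) ℂ)ᵀ
          * sympJ n * ((a⁻¹ : Matrix.unitaryGroup (Fin (2 * n)) ℂ) : Matrix _ _ ℂ)
        = ((a⁻¹ : Matrix.unitaryGroup (Fin (2 * n)) ℂ) : Matrix _ _ ℂ)ᵀ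
          * ((a : Matrix _ _ ℂ)ᵀ * sympJ n * (a : Matrix _ _ ℂ))
          * ((a⁻¹ : Matrix.unitaryGroup (Fin (2 * n)) ℂ) : Matrix _ _ ℂ) := by rw [ha]
      _ = ((a : Matrix _ _ ℂ)
            * ((a⁻¹ : Matrix.unitaryGroup (Fin (2 * n)) ℂ) : Matrix _ _ ℂ))ᵀ
          * sympJ n
          * ((a : Matrix _ _ ℂ)
            * ((a⁻¹ : Matrix.unitaryGroup (Fin (2 * n)) ℂ) : Matrix _ _ ℂ)) := by
          simp only [Matrix.transpose_mul, Matrix.mul_assoc]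
      _ = sympJ n := by rw [h1]; simp

/-!
Conjugate elements have equal traces, so `φ = w ↦ w(g)` and `ψ = w ↦ w(g')` are unitary
representations of the free group on `ℂ²ⁿ` with the same character. Such representations are
semisimple, and a finite-dimensional semisimple module in characteristic zero is determined by its
character: if there were no nonzero homomorphism between two of them, Jacobson density would give
an algebra element acting as `1` on one and as `0` on the other. Hence an invertible matrix `X`
intertwines `φ` and `ψ`.

To move `X` into `Sp(n)`, use that `Sp(n)` consists of the unitary matrices fixed by
`τ X = J⁻¹ X̄ J`. Some real combination of `X + τ X` and `i(X - τ X)` is an invertible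
intertwiner fixed by `τ`, and its unitary polar factor, being given by functional calculus, still
intertwines and is still fixed by `τ`.
-/

section SemisimpleModule

variable {R M N : Type*} [Ring R] [AddCommGroup M] [Module R M] [AddCommGroup N] [Module R N]
  [IsSemisimpleModule R M] [IsSemisimpleModule R N]

lemma isSemisimpleModule_prod : IsSemisimpleModule R (M × N) := by
  rw [← Submodule.topEquiv.isSemisimpleModule_iff, ← LinearMap.sup_range_inl_inr]
  exact .sup (.range _) (.range _)

lemma exists_linearMap_ne_zero_symm {f : N →ₗ[R] M} (hf : f ≠ 0) :
    ∃ g : M →ₗ[R] N, g ≠ 0 := by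
  obtain ⟨C, hC⟩ := exists_isCompl (LinearMap.range f)
  obtain ⟨g, hg⟩ := IsSemisimpleModule.lifting_property f.rangeRestrict f.surjective_rangeRestrict
    ((LinearMap.range f).projectionOnto C hC)
  refine ⟨g, ?_⟩
  rintro rfl
  refine hf (LinearMap.ext fun x => ?_)
  calc f x = (LinearMap.range f).projectionOnto C hC (f x) := by
        rw [Submodule.projectionOnto_apply_of_mem_left hC (LinearMap.mem_range_self f x)]
    _ = 0 := by rw [← hg, LinearMap.comp_zero, LinearMap.zero_apply, Submodule.coe_zero]

/-- If there are no nonzero homomorphisms between `M` and `N`, the projection of `M × N` onto `M`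
commutes with all endomorphisms, so by Jacobson density it is multiplication by a scalar. -/
lemma exists_smul_eq_self_and_smul_eq_zero [Module.Finite (Module.End R (M × N)) (M × N)]
    (hMN : ∀ f : M →ₗ[R] N, f = 0) (hNM : ∀ f : N →ₗ[R] M, f = 0) :
    ∃ r : R, (∀ x : M, r • x = x) ∧ ∀ y : N, r • y = 0 := by
  have := isSemisimpleModule_prod (R := R) (M := M) (N := N)
  let projM : Module.End (Module.End R (M × N)) (M × N) :=
    { toFun z := (z.1, 0)
      map_add' := by simp
      map_smul' := by
        rintro φ ⟨x, y⟩
        have hx : (φ (x, 0)).2 = 0 :=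
          LinearMap.congr_fun (hMN (LinearMap.snd R M N ∘ₗ φ ∘ₗ LinearMap.inl R M N)) x
        have hy : (φ (0, y)).1 = 0 :=
          LinearMap.congr_fun (hNM (LinearMap.fst R M N ∘ₗ φ ∘ₗ LinearMap.inr R M N)) y
        have hxy : φ (x, y) = φ (x, 0) + φ (0, y) := by rw [← map_add]; simp
        ext <;> simp [hx, hy, hxy] }
  obtain ⟨r, hr⟩ := Module.Finite.toModuleEnd_moduleEnd_surjective projM
  refine ⟨r, fun x => ?_, fun y => ?_⟩
  · exact congrArg Prod.fst (LinearMap.congr_fun hr (x, 0))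
  · exact congrArg Prod.snd (LinearMap.congr_fun hr (0, y))

end SemisimpleModule

section ModuleCharacter

variable (k : Type*) [CommRing k] {R : Type*} [Semiring R] [Algebra k R]

/-- The character of an `R`-module `M` over a `k`-algebra `R`: the linear form sending `r` to the
trace of `x ↦ r • x` on `M`. It is the junk value `0` if `M` has no finite `k`-basis. -/
noncomputable def moduleCharacter (M : Type*) [AddCommGroup M] [Module k M] [Module R M]
    [IsScalarTower k R M] : R →ₗ[k] k :=
  LinearMap.trace k M ∘ₗ (Algebra.lsmul k k M).toLinearMap

variable {M N : Type*} [AddCommGroup M] [Module k M] [Module R M] [IsScalarTower k R M]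
  [AddCommGroup N] [Module k N] [Module R N] [IsScalarTower k R N]

lemma moduleCharacter_apply (r : R) :
    moduleCharacter k M r = LinearMap.trace k M (Algebra.lsmul k k M r) := rfl

lemma moduleCharacter_one [Module.Free k M] [Module.Finite k M] :
    moduleCharacter k M (1 : R) = Module.finrank k M := by
  rw [moduleCharacter_apply, map_one, LinearMap.trace_one]

lemma moduleCharacter_congr (e : M ≃ₗ[R] N) :
    moduleCharacter k M (R := R) = moduleCharacter k N := by
  ext r
  rw [moduleCharacter_apply, moduleCharacter_apply,
    ← LinearMap.trace_conj' _ (e.restrictScalars k)]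
  congr 1
  ext x
  simp [LinearEquiv.conj_apply]

lemma moduleCharacter_prod [Module.Free k M] [Module.Finite k M] [Module.Free k N]
    [Module.Finite k N] :
    moduleCharacter k (M × N) (R := R) = moduleCharacter k M + moduleCharacter k N := by
  ext r
  exact LinearMap.trace_prodMap' (Algebra.lsmul k k M r) (Algebra.lsmul k k N r)

end ModuleCharacter

section SemisimpleCharacter

variable (k : Type*) [Field k] {R : Type*} [Ring R] [Algebra k R]
  {M N : Type*} [AddCommGroup M] [Module k M] [Module R M] [IsScalarTower k R M]
  [AddCommGroup N] [Module k N] [Module R N] [IsScalarTower k R N]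

lemma finiteDimensional_submodule [FiniteDimensional k M] (P : Submodule R M) :
    FiniteDimensional k P :=
  inferInstanceAs (FiniteDimensional k (P.restrictScalars k))

lemma moduleCharacter_add_of_isCompl [FiniteDimensional k M] {P Q : Submodule R M}
    (h : IsCompl P Q) :
    moduleCharacter k P (R := R) + moduleCharacter k Q = moduleCharacter k M := by
  have := finiteDimensional_submodule k P
  have := finiteDimensional_submodule k Q
  rw [← moduleCharacter_prod, moduleCharacter_congr k (Submodule.prodEquivOfIsCompl P Q h)]

variable [CharZero k] [FiniteDimensional k M] [FiniteDimensional k N]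

lemma finrank_eq_of_moduleCharacter_eq
    (h : moduleCharacter k M (R := R) = moduleCharacter k N) :
    Module.finrank k M = Module.finrank k N := by
  have h1 := LinearMap.congr_fun h 1
  rw [moduleCharacter_one, moduleCharacter_one] at h1
  exact_mod_cast h1

variable [IsSemisimpleModule R M] [IsSemisimpleModule R N]

lemma exists_linearMap_ne_zero_of_moduleCharacter_eq [Nontrivial M]
    (h : moduleCharacter k M (R := R) = moduleCharacter k N) : ∃ f : M →ₗ[R] N, f ≠ 0 := by
  by_contra! hMN
  have hNM (f : N →ₗ[R] M) : f = 0 := by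
    by_contra hf
    obtain ⟨g, hg⟩ := exists_linearMap_ne_zero_symm hf
    exact hg (hMN g)
  have : Module.Finite (Module.End R (M × N)) (M × N) := .of_restrictScalars_finite k _ _
  obtain ⟨r, hrM, hrN⟩ := exists_smul_eq_self_and_smul_eq_zero hMN hNM
  have hM : Algebra.lsmul k k M r = 1 := LinearMap.ext hrM
  have hN : Algebra.lsmul k k N r = 0 := LinearMap.ext hrN
  have hr := LinearMap.congr_fun h r
  rw [moduleCharacter_apply, moduleCharacter_apply, hM, hN, LinearMap.trace_one, map_zero,
    Nat.cast_eq_zero] at hr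
  exact Module.finrank_pos.ne' hr

end SemisimpleCharacter

section LinearEquiv

variable {k R : Type*} [Field k] [CharZero k] [Ring R] [Algebra k R]

/-- A nonzero homomorphism `f : M → N` identifies a nonzero direct summand of `M` with one of `N`;
the remaining summands have equal characters, so induction on the dimension applies to them. -/
theorem nonempty_linearEquiv_of_moduleCharacter_eq {M N : Type*}
    [AddCommGroup M] [Module k M] [Module R M] [IsScalarTower k R M] [FiniteDimensional k M]
    [AddCommGroup N] [Module k N] [Module R N] [IsScalarTower k R N] [FiniteDimensional k N]
    [IsSemisimpleModule R M] [IsSemisimpleModule R N]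
    (h : moduleCharacter k M (R := R) = moduleCharacter k N) : Nonempty (M ≃ₗ[R] N) := by
  induction hd : Module.finrank k M using Nat.strong_induction_on generalizing M N with
  | _ d ih =>
  subst hd
  rcases subsingleton_or_nontrivial M with hM | hM
  · have hN : Module.finrank k N = 0 := by
      rw [← finrank_eq_of_moduleCharacter_eq k h, Module.finrank_zero_of_subsingleton]
    have := Module.finrank_zero_iff.mp hN
    exact ⟨0⟩
  obtain ⟨f, hf⟩ := exists_linearMap_ne_zero_of_moduleCharacter_eq k h
  obtain ⟨C, hC⟩ := exists_isCompl (LinearMap.ker f)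
  obtain ⟨D, hD⟩ := exists_isCompl (LinearMap.range f)
  have := finiteDimensional_submodule k (LinearMap.ker f)
  have := finiteDimensional_submodule k D
  let eC : C ≃ₗ[R] LinearMap.range f :=
    (Submodule.quotientEquivOfIsCompl _ C hC).symm.trans f.quotKerEquivRange
  have hker : moduleCharacter k (LinearMap.ker f) (R := R) = moduleCharacter k D := by
    rw [← add_left_inj (moduleCharacter k C), moduleCharacter_add_of_isCompl k hC, h,
      moduleCharacter_congr k eC, add_comm, moduleCharacter_add_of_isCompl k hD]
  have hlt : Module.finrank k (LinearMap.ker f) < Module.finrank k M :=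
    Submodule.finrank_lt (s := (LinearMap.ker f).restrictScalars k) (by
      rwa [Ne, Submodule.restrictScalars_eq_top_iff, LinearMap.ker_eq_top])
  obtain ⟨e⟩ := ih _ hlt hker rfl
  exact ⟨((Submodule.prodEquivOfIsCompl _ C hC).symm.trans (e.prodCongr eC)).trans
    ((LinearEquiv.prodComm R D _).trans (Submodule.prodEquivOfIsCompl _ D hD))⟩

end LinearEquiv

section Representation

variable {k G V W : Type*} [Field k] [Monoid G] [AddCommGroup V] [Module k V]
  [AddCommGroup W] [Module k W]

lemma moduleCharacter_asModule_of (ρ : Representation k G V) (g : G) :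
    moduleCharacter k ρ.asModule (MonoidAlgebra.of k G g) = ρ.character g := by
  have hconj : ρ.asModuleEquiv.conj
      (Algebra.lsmul k k ρ.asModule (MonoidAlgebra.of k G g)) = ρ g := by
    ext x
    rw [LinearEquiv.conj_apply_apply, Algebra.lsmul_coe, Representation.asModuleEquiv_map_smul,
      Representation.asAlgebraHom_of, LinearEquiv.apply_symm_apply]
  rw [moduleCharacter_apply, ← LinearMap.trace_conj' _ ρ.asModuleEquiv, hconj]
  rfl

theorem nonempty_representationEquiv_of_character_eq [CharZero k] [FiniteDimensional k V]
    [FiniteDimensional k W] {ρ : Representation k G V} {σ : Representation k G W}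
    [ρ.IsSemisimpleRepresentation] [σ.IsSemisimpleRepresentation]
    (h : ρ.character = σ.character) : Nonempty (ρ.Equiv σ) := by
  have := ρ.asModuleEquiv.symm.finiteDimensional
  have := σ.asModuleEquiv.symm.finiteDimensional
  have := ρ.isSemisimpleRepresentation_iff_isSemisimpleModule_asModule.mp inferInstance
  have := σ.isSemisimpleRepresentation_iff_isSemisimpleModule_asModule.mp inferInstance
  have hchar : moduleCharacter k ρ.asModule (R := MonoidAlgebra k G) =
      moduleCharacter k σ.asModule := by
    refine MonoidAlgebra.lhom_ext' fun g => LinearMap.ext_ring ?_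
    exact (moduleCharacter_asModule_of ρ g).trans
      ((congrFun h g).trans (moduleCharacter_asModule_of σ g).symm)
  obtain ⟨e⟩ := nonempty_linearEquiv_of_moduleCharacter_eq hchar
  let f := (Representation.IntertwiningMap.equivLinearMapAsModule ρ σ).symm e.toLinearMap
  exact ⟨.mk (.ofBijective f.toLinearMap e.bijective) f.isIntertwining'⟩

end Representation

section UnitaryRepresentation

open scoped InnerProductSpace

lemma isSemisimpleRepresentation_of_inner_map_map {𝕜 G V : Type*} [RCLike 𝕜] [Group G]
    [NormedAddCommGroup V] [InnerProductSpace 𝕜 V] [FiniteDimensional 𝕜 V]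
    {ρ : Representation 𝕜 G V} (hρ : ∀ g v w, ⟪ρ g v, ρ g w⟫_𝕜 = ⟪v, w⟫_𝕜) :
    ρ.IsSemisimpleRepresentation := by
  refine ⟨fun W => ?_⟩
  have hperp (g : G) : W.toSubmoduleᗮ ∈ Module.End.invtSubmodule (ρ g) := by
    intro v hv w hw
    rw [← hρ g⁻¹, ρ.inv_self_apply]
    exact hv _ (W.apply_mem_toSubmodule g⁻¹ hw)
  have hcompl := Submodule.isCompl_orthogonal (K := W.toSubmodule)
  refine ⟨⟨W.toSubmoduleᗮ, fun g v hv => hperp g hv⟩, ?_, ?_⟩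
  · exact disjoint_iff.mpr (Subrepresentation.toSubmodule_injective hcompl.inf_eq_bot)
  · exact codisjoint_iff.mpr (Subrepresentation.toSubmodule_injective hcompl.sup_eq_top)

variable {𝕜 G m : Type*} [RCLike 𝕜] [Group G] [Fintype m] [DecidableEq m]

/-- The representation on `EuclideanSpace 𝕜 m` given by a homomorphism to the unitary group. -/
noncomputable def unitaryRep (φ : G →* Matrix.unitaryGroup m 𝕜) :
    Representation 𝕜 G (EuclideanSpace 𝕜 m) :=
  ((Matrix.toLpLinAlgEquiv 2 : Matrix m m 𝕜 ≃ₐ[𝕜] _) : Matrix m m 𝕜 →* _).comp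
    ((Matrix.unitaryGroup m 𝕜).subtype.comp φ)

lemma unitaryRep_apply (φ : G →* Matrix.unitaryGroup m 𝕜) (g : G) :
    unitaryRep φ g = Matrix.toLpLinAlgEquiv 2 (φ g : Matrix m m 𝕜) := rfl

lemma inner_unitaryRep_unitaryRep (φ : G →* Matrix.unitaryGroup m 𝕜) (g : G)
    (v w : EuclideanSpace 𝕜 m) : ⟪unitaryRep φ g v, unitaryRep φ g w⟫_𝕜 = ⟪v, w⟫_𝕜 :=
  ContinuousLinearMap.inner_map_map_of_mem_unitary
    (Unitary.map_mem (Matrix.toEuclideanCLM (n := m) (𝕜 := 𝕜)) (φ g).2) v w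

instance isSemisimpleRepresentation_unitaryRep (φ : G →* Matrix.unitaryGroup m 𝕜) :
    (unitaryRep φ).IsSemisimpleRepresentation :=
  isSemisimpleRepresentation_of_inner_map_map (inner_unitaryRep_unitaryRep φ)

lemma character_unitaryRep (φ : G →* Matrix.unitaryGroup m 𝕜) (g : G) :
    (unitaryRep φ).character g = (φ g : Matrix m m 𝕜).trace := by
  rw [Representation.character, unitaryRep_apply]
  exact Matrix.trace_toLin_eq _ (EuclideanSpace.basisFun m 𝕜).toBasis

lemma exists_isUnit_semiconjBy_of_trace_eq {φ ψ : G →* Matrix.unitaryGroup m 𝕜}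
    (h : ∀ g, (φ g : Matrix m m 𝕜).trace = (ψ g : Matrix m m 𝕜).trace) :
    ∃ X : Matrix m m 𝕜, IsUnit X ∧ ∀ g, SemiconjBy X (φ g : Matrix m m 𝕜) (ψ g) := by
  have hchar : (unitaryRep φ).character = (unitaryRep ψ).character := by
    ext g
    rw [character_unitaryRep, character_unitaryRep, h]
  obtain ⟨e⟩ := nonempty_representationEquiv_of_character_eq hchar
  let toEnd : Matrix m m 𝕜 ≃ₐ[𝕜] Module.End 𝕜 (EuclideanSpace 𝕜 m) := Matrix.toLpLinAlgEquiv 2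
  let f : Module.End 𝕜 (EuclideanSpace 𝕜 m) := e.toLinearEquiv.toLinearMap
  have hf : IsUnit f := (Module.End.isUnit_iff f).mpr e.toLinearEquiv.bijective
  refine ⟨toEnd.symm f, hf.map toEnd.symm, fun g => toEnd.injective ?_⟩
  rw [map_mul, map_mul, AlgEquiv.apply_symm_apply]
  exact e.isIntertwining' g

end UnitaryRepresentation

section FixedIntertwiner

lemma exists_mem_isUnit_add_smul {K m : Type*} [Field K] [Fintype m] [DecidableEq m]
    {A B : Matrix m m K} {z : K} (hz : IsUnit (A + z • B)) {S : Set K} (hS : S.Infinite) :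
    ∃ t ∈ S, IsUnit (A + t • B) := by
  let p : Polynomial K :=
    (A.map Polynomial.C + (Polynomial.X : Polynomial K) • B.map Polynomial.C).det
  have heval (t : K) : p.eval t = (A + t • B).det := by
    rw [← Polynomial.coe_evalRingHom, RingHom.map_det]
    congr 1
    ext i j
    simp [mul_comm t]
  have hp : p ≠ 0 := by
    intro h0
    have := (Matrix.isUnit_iff_isUnit_det _).mp hz
    simp [← heval, h0] at this
  by_contra! hsing
  refine hp (Polynomial.eq_zero_of_infinite_isRoot p (hS.mono fun t ht => ?_))
  have := hsing t ht
  rwa [Matrix.isUnit_iff_isUnit_det, isUnit_iff_ne_zero, not_not, ← heval] at this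

variable {m ι : Type*} [Fintype m] [DecidableEq m]

/-- The combinations `(X + τ X) + t • I • (X - τ X)` with `t` real are intertwiners fixed by `τ`.
As `t = -I` gives `2 • X`, their determinant is a nonzero polynomial in `t`. -/
lemma exists_isUnit_fixed_semiconjBy {τ : Matrix m m ℂ →ₐ[ℝ] Matrix m m ℂ}
    (hτ : Function.Involutive τ) (hI : ∀ X, τ (Complex.I • X) = -(Complex.I • τ X))
    {a b : ι → Matrix m m ℂ} (ha : ∀ i, τ (a i) = a i) (hb : ∀ i, τ (b i) = b i)
    {X : Matrix m m ℂ} (hX : IsUnit X) (hab : ∀ i, SemiconjBy X (a i) (b i)) :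
    ∃ Y, IsUnit Y ∧ τ Y = Y ∧ ∀ i, SemiconjBy Y (a i) (b i) := by
  have hτab (i : ι) : SemiconjBy (τ X) (a i) (b i) := by
    simpa only [ha, hb] using (hab i).map τ
  have hcomb : X + τ X + -Complex.I • Complex.I • (X - τ X) = (2 : ℂ) • X := by
    rw [neg_smul, smul_smul, Complex.I_mul_I]
    module
  have hunit : IsUnit (X + τ X + -Complex.I • Complex.I • (X - τ X)) := by
    rw [hcomb]
    exact hX.smul (Units.mk0 (2 : ℂ) two_ne_zero)
  obtain ⟨_, ⟨t, rfl⟩, ht⟩ := exists_mem_isUnit_add_smul hunit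
    (Set.infinite_range_of_injective Complex.ofReal_injective)
  refine ⟨_, ht, ?_, fun i => ?_⟩
  · rw [map_add, map_add, hτ, Complex.coe_smul, map_smul, hI, map_sub, hτ, ← smul_neg, neg_sub,
      add_comm X]
  · exact ((hab i).add_left (hτab i)).add_left
      ((((hab i).sub_left (hτab i)).smul_left _).smul_left _)

end FixedIntertwiner

section UnitaryPart

variable {A : Type*} [CStarAlgebra A]

/-- The unitary factor `y |y|⁻¹` of the polar decomposition of an element `y` of a C⋆-algebra. It
is a junk value unless `y` is invertible. -/
noncomputable def unitaryPart (y : A) : A :=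
  y * cfc (fun x : ℝ => (√x)⁻¹) (star y * y)

lemma pos_of_mem_spectrum_star_mul_self {y : A} (hy : IsUnit y) {x : ℝ}
    (hx : x ∈ spectrum ℝ (star y * y)) : 0 < x :=
  (spectrum_star_mul_self_nonneg x hx).lt_of_ne' <| by
    rintro rfl
    exact spectrum.zero_notMem ℝ (hy.star.mul hy) hx

lemma continuousOn_inv_sqrt_spectrum_star_mul_self {y : A} (hy : IsUnit y) :
    ContinuousOn (fun x : ℝ => (√x)⁻¹) (spectrum ℝ (star y * y)) :=
  Real.continuous_sqrt.continuousOn.inv₀ fun _ hx =>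
    (Real.sqrt_pos.mpr (pos_of_mem_spectrum_star_mul_self hy hx)).ne'

lemma star_unitaryPart_mul_self {y : A} (hy : IsUnit y) :
    star (unitaryPart y) * unitaryPart y = 1 := by
  have hcont := continuousOn_inv_sqrt_spectrum_star_mul_self hy
  set f : ℝ → ℝ := fun x => (√x)⁻¹
  calc star (unitaryPart y) * unitaryPart y
      = cfc f (star y * y) * (star y * y) * cfc f (star y * y) := by
        simp only [unitaryPart, star_mul, (IsSelfAdjoint.cfc (f := f)).star_eq, mul_assoc, f]
    _ = cfc (fun x => f x * x * f x) (star y * y) := by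
        rw [cfc_mul .., cfc_mul .., cfc_id' ℝ (star y * y)]
    _ = cfc (fun _ => (1 : ℝ)) (star y * y) := by
        refine cfc_congr fun x hx => ?_
        have hpos := Real.sqrt_pos.mpr (pos_of_mem_spectrum_star_mul_self hy hx)
        calc f x * x * f x = (√x)⁻¹ * (√x * √x) * (√x)⁻¹ := by
              rw [Real.mul_self_sqrt (Real.sqrt_pos.mp hpos).le]
          _ = 1 := by field_simp
    _ = 1 := cfc_const_one ℝ _

lemma isUnit_unitaryPart {y : A} (hy : IsUnit y) : IsUnit (unitaryPart y) := by
  refine hy.mul ((isUnit_cfc_iff _ _ (continuousOn_inv_sqrt_spectrum_star_mul_self hy)).mpr ?_)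
  exact fun x hx => (inv_pos.mpr (Real.sqrt_pos.mpr (pos_of_mem_spectrum_star_mul_self hy hx))).ne'

lemma unitaryPart_mem_unitary {y : A} (hy : IsUnit y) : unitaryPart y ∈ unitary A :=
  (isUnit_unitaryPart hy).mem_unitary_of_star_mul_self (star_unitaryPart_mul_self hy)

lemma semiconjBy_unitaryPart {y a b : A} (h : SemiconjBy y a b)
    (hstar : SemiconjBy y (star a) (star b)) : SemiconjBy (unitaryPart y) a b := by
  have hadj : SemiconjBy (star y) b a := by
    simpa [SemiconjBy] using congrArg star hstar.eq.symm
  have hcomm : Commute (star y * y) a := hadj.mul_left h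
  exact h.mul_left (hcomm.cfc_real _)

lemma map_unitaryPart {τ : A →⋆ₐ[ℝ] A} (hτ : Continuous τ) {y : A} (hy : IsUnit y) :
    τ (unitaryPart y) = unitaryPart (τ y) := by
  have hsa : IsSelfAdjoint (star (τ y) * τ y) := .star_mul_self _
  have hmap : τ (star y * y) = star (τ y) * τ y := by rw [map_mul, map_star]
  rw [unitaryPart, map_mul, StarAlgHom.map_cfc τ _ _
    (continuousOn_inv_sqrt_spectrum_star_mul_self hy) hτ (hφa := hmap ▸ hsa), hmap, unitaryPart]

end UnitaryPart

section FixedUnitary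

open scoped Matrix.Norms.L2Operator

theorem exists_unitary_fixed_eq_conj_of_trace_eq {G m : Type*} [Group G] [Fintype m]
    [DecidableEq m] {τ : Matrix m m ℂ →⋆ₐ[ℝ] Matrix m m ℂ} (hτ : Function.Involutive τ)
    (hI : ∀ X, τ (Complex.I • X) = -(Complex.I • τ X)) {φ ψ : G →* Matrix.unitaryGroup m ℂ}
    (hφ : ∀ g, τ (φ g) = φ g) (hψ : ∀ g, τ (ψ g) = ψ g)
    (h : ∀ g, (φ g : Matrix m m ℂ).trace = (ψ g : Matrix m m ℂ).trace) :
    ∃ k : Matrix.unitaryGroup m ℂ, τ k = k ∧ ∀ g, ψ g = k * φ g * k⁻¹ := by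
  obtain ⟨X, hX, hXsemi⟩ := exists_isUnit_semiconjBy_of_trace_eq h
  obtain ⟨Y, hY, hYfixed, hYsemi⟩ :=
    exists_isUnit_fixed_semiconjBy (τ := τ.toAlgHom) hτ hI hφ hψ hX hXsemi
  have hτcont : Continuous τ := τ.toAlgHom.toLinearMap.continuous_of_finiteDimensional
  refine ⟨⟨unitaryPart Y, unitaryPart_mem_unitary hY⟩, ?_, fun g => ?_⟩
  · exact (map_unitaryPart hτcont hY).trans (congrArg unitaryPart hYfixed)
  · have hstar : SemiconjBy Y (star (φ g : Matrix m m ℂ)) (star (ψ g : Matrix m m ℂ)) := by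
      have := hYsemi g⁻¹
      rwa [map_inv, map_inv] at this
    exact eq_mul_inv_of_mul_eq (Subtype.ext (semiconjBy_unitaryPart (hYsemi g) hstar).eq.symm)

end FixedUnitary

section Symplectic

variable {n : ℕ}

lemma sympJ_eq_reindex (n : ℕ) :
    sympJ n = Matrix.reindexAlgEquiv ℂ ℂ (finSumFinEquiv.trans (finCongr (two_mul n).symm))
      (-Matrix.J (Fin n) ℂ) := by
  let e := finSumFinEquiv.trans (finCongr (two_mul n).symm)
  suffices h : ∀ a b, sympJ n (e a) (e b) = -Matrix.J (Fin n) ℂ a b by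
    ext i j
    simpa [e] using h (e.symm i) (e.symm j)
  rintro (a | a) (b | b) <;>
    simp [e, sympJ, Matrix.J, Matrix.one_apply, Fin.ext_iff, eq_comm] <;> grind

lemma sympJ_mul_self (n : ℕ) : sympJ n * sympJ n = -1 := by
  rw [sympJ_eq_reindex, ← map_mul, neg_mul_neg, Matrix.J_squared, map_neg, map_one]

lemma transpose_sympJ (n : ℕ) : (sympJ n)ᵀ = -sympJ n := by
  ext i j
  simp only [sympJ, Matrix.transpose_apply, Matrix.neg_apply]
  split_ifs <;> first | omega | simp

lemma conjTranspose_sympJ (n : ℕ) : (sympJ n)ᴴ = -sympJ n := by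
  rw [← transpose_sympJ]
  ext i j
  simp only [sympJ, Matrix.transpose_apply, Matrix.conjTranspose_apply, apply_ite star, star_one,
    star_neg, star_zero]

/-- The automorphism `X ↦ J⁻¹ X̄ J` of the real algebra of complex `2n × 2n` matrices, where the
entrywise conjugate `X̄` is written as `Xᴴᵀ`. Its fixed points are the quaternionic `n × n`
matrices. -/
noncomputable def sympConj (n : ℕ) :
    Matrix (Fin (2 * n)) (Fin (2 * n)) ℂ →⋆ₐ[ℝ] Matrix (Fin (2 * n)) (Fin (2 * n)) ℂ where
  toFun X := -(sympJ n * Xᴴᵀ * sympJ n)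
  map_one' := by simp [sympJ_mul_self]
  map_mul' X Y := by
    calc -(sympJ n * (X * Y)ᴴᵀ * sympJ n)
        = sympJ n * Xᴴᵀ * (-1) * Yᴴᵀ * sympJ n := by
          simp [mul_assoc]
      _ = -(sympJ n * Xᴴᵀ * sympJ n) * -(sympJ n * Yᴴᵀ * sympJ n) := by
          rw [← sympJ_mul_self]
          simp only [mul_assoc, neg_mul_neg]
  map_zero' := by simp
  map_add' X Y := by simp [mul_add, add_mul, add_comm]
  commutes' r := by
    simp [Algebra.algebraMap_eq_smul_one, sympJ_mul_self]
  map_star' X := by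
    have hX : Xᴴᵀᴴ = Xᵀ := by ext i j; simp
    simp [Matrix.star_eq_conjTranspose, conjTranspose_sympJ, hX, mul_assoc]

lemma sympConj_apply (X : Matrix (Fin (2 * n)) (Fin (2 * n)) ℂ) :
    sympConj n X = -(sympJ n * Xᴴᵀ * sympJ n) := rfl

lemma sympConj_involutive : Function.Involutive (sympConj n) := fun X => by
  have hX : Xᴴᵀᴴᵀ = X := by ext i j; simp
  calc sympConj n (sympConj n X)
      = (sympJ n * sympJ n) * X * (sympJ n * sympJ n) := by
        simp [sympConj_apply, conjTranspose_sympJ, transpose_sympJ, mul_assoc, hX]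
    _ = X := by simp [sympJ_mul_self]

lemma sympConj_I_smul (X : Matrix (Fin (2 * n)) (Fin (2 * n)) ℂ) :
    sympConj n (Complex.I • X) = -(Complex.I • sympConj n X) := by
  simp [sympConj_apply]

lemma sympConj_eq_self_iff (X : Matrix (Fin (2 * n)) (Fin (2 * n)) ℂ) :
    sympConj n X = X ↔ sympJ n * X = Xᴴᵀ * sympJ n := by
  have hJ : sympJ n * sympConj n X = Xᴴᵀ * sympJ n := by
    calc sympJ n * sympConj n X = -(sympJ n * sympJ n * Xᴴᵀ * sympJ n) := by
          simp only [sympConj_apply, mul_assoc, mul_neg]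
      _ = Xᴴᵀ * sympJ n := by simp [sympJ_mul_self]
  have hunit : IsUnit (sympJ n) := .of_mul_eq_one (-sympJ n) (by simp [sympJ_mul_self])
  rw [← hJ, hunit.mul_right_inj, eq_comm]

lemma mem_Sp_iff_sympConj_eq (u : Matrix.unitaryGroup (Fin (2 * n)) ℂ) :
    u ∈ Sp n ↔ sympConj n u = u := by
  set X : Matrix (Fin (2 * n)) (Fin (2 * n)) ℂ := u.1
  have hX : Xᴴᵀ * Xᵀ = 1 := by
    rw [← Matrix.transpose_mul, ← Matrix.star_eq_conjTranspose, Unitary.mul_star_self_of_mem u.2,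
      Matrix.transpose_one]
  calc u ∈ Sp n ↔ Xᵀ * (sympJ n * X) = sympJ n := by rw [← mul_assoc]; rfl
    _ ↔ sympJ n * X = Xᴴᵀ * sympJ n := by
      rw [← (IsUnit.of_mul_eq_one _ hX).mul_right_inj, ← mul_assoc, hX, one_mul]
    _ ↔ sympConj n X = X := (sympConj_eq_self_iff X).symm

lemma trace_coe_conj (x k : Sp n) :
    ((k * x * k⁻¹ : Sp n) : Matrix (Fin (2 * n)) (Fin (2 * n)) ℂ).trace =
      (x : Matrix (Fin (2 * n)) (Fin (2 * n)) ℂ).trace := by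
  have h : ((k⁻¹ * (k * x) : Sp n) : Matrix (Fin (2 * n)) (Fin (2 * n)) ℂ) = x := by
    rw [inv_mul_cancel_left]
  exact (Matrix.trace_mul_comm _ _).trans (congrArg Matrix.trace h)

theorem wilson_words_determine_diagonal_conjugacy_symplectic_general {Γ : Type*} [Group Γ]
    (φ ψ : Γ →* Sp n)
    (h : ∀ γ, (φ γ : Matrix (Fin (2 * n)) (Fin (2 * n)) ℂ).trace =
      (ψ γ : Matrix (Fin (2 * n)) (Fin (2 * n)) ℂ).trace) :
    ∃ k : Sp n, ∀ γ, ψ γ = k * φ γ * k⁻¹ := by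
  have hfixed (x : Sp n) : sympConj n x = x := (mem_Sp_iff_sympConj_eq x.1).mp x.2
  obtain ⟨k, hk, hconj⟩ := exists_unitary_fixed_eq_conj_of_trace_eq sympConj_involutive
    sympConj_I_smul (φ := (Sp n).subtype.comp φ) (ψ := (Sp n).subtype.comp ψ)
    (fun γ => hfixed (φ γ)) (fun γ => hfixed (ψ γ)) h
  exact ⟨⟨k, (mem_Sp_iff_sympConj_eq k).mpr hk⟩, fun γ => Subtype.ext (hconj γ)⟩

end Symplectic

/-- **Wilson loops determine the diagonal conjugacy class in `Sp(n)`.**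
If `g, g' : Fin r → Sp(n)` are such that for every word `w` in the free group on `r`
generators the elements `w(g)` and `w(g')` are conjugate in `Sp(n)`, then `g` and `g'`
are diagonally conjugate. -/
theorem wilson_words_determine_diagonal_conjugacy_symplectic
    (n r : ℕ) (hn : 1 ≤ n) (hr : 1 ≤ r)
    (g g' : Fin r → Sp n)
    (h : ∀ w : FreeGroup (Fin r), ∃ k : Sp n,
      FreeGroup.lift g' w = k * FreeGroup.lift g w * k⁻¹) :
    ∃ k : Sp n, ∀ i : Fin r, g' i = k * g i * k⁻¹ := by
  obtain ⟨k, hk⟩ := wilson_words_determine_diagonal_conjugacy_symplectic_general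
    (FreeGroup.lift g) (FreeGroup.lift g') fun w => by
      obtain ⟨x, hx⟩ := h w
      rw [hx, trace_coe_conj]
  exact ⟨k, fun i => by simpa only [FreeGroup.lift_apply_of] using hk (.of i)⟩
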